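/- Let (L,[-,-,-]) be a ternary Leibniz algebra over a field K, (V,λ,μ,ρ) a representation of L on V, and T : V → L an O-operator, i.e. a linear map satisfying [T(u),T(v),T(w)] = T(λ(T(u),T(v))w + μ(T(u),T(w))v + ρ(T(v),T(w))u) for all u,v,w ∈ V. Then the bracket [u₁,u₂,u₃]_T := λ(T(u₁),T(u₂))(u₃) + μ(T(u₁),T(u₃))(u₂) + ρ(T(u₂),T(u₃))(u₁) makes V into a ternary Leibniz algebra. -/

import Mathlib

variable {K : Type*} [Field K] {L : Type*} [AddCommGroup L] [Module K L]
variable {V : Type*} [AddCommGroup V] [Module K V]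

/-- The (right) ternary Leibniz identity for a ternary bracket. -/
def TernaryLeibnizId {A : Type*} [AddCommGroup A] (b : A → A → A → A) : Prop :=
  ∀ x y z t u : A,
    b (b x y z) t u = b x y (b z t u) + b x (b y t u) z + b (b x t u) y z

/-- A representation `(V, λ, μ, ρ)` of a ternary Leibniz algebra `(L, t)` on `V`. -/
def IsTernaryRep (t : L → L → L → L)
    (lam mu rho : L → L → Module.End K V) : Prop :=
  (∀ x y z w : L,
    lam (t x y z) w = lam x y * lam z w + mu x z * lam y w + rho y z * lam x w) ∧
  (∀ x y z w : L,
    mu (t x y z) w = lam x y * mu z w + mu x z * mu y w + rho y z * mu x w) ∧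
  (∀ x y z w : L,
    rho z w * lam x y = lam x y * rho z w + lam x (t y z w) + lam (t x z w) y) ∧
  (∀ x y z w : L,
    rho z w * mu x y = mu x (t y z w) + mu x y * rho z w + mu (t x z w) y) ∧
  (∀ x y z w : L,
    rho z w * rho x y = rho x (t y z w) + rho (t x z w) y + rho x y * rho z w)

/-!
On `L × V` put the semidirect-product bracket. The representation axioms are the `V`-component of
its Leibniz identity: one axiom for each of the five positions of the entry taken from `V`. An
`O`-operator is a map whose graph is closed under this bracket, and the projection of the graph
to `V` carries the restricted bracket to `[-,-,-]_T`.
-/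

section Brackets

variable {R X M : Type*} [Semiring R] [AddCommMonoid M] [Module R M]

/-- The bracket of the semidirect product of `X` and `M`: the bracket `t` in the first component,
and in the second the sum of the actions on the `M`-part of each of the three arguments. -/
def semidirectBracket (t : X → X → X → X) (lam mu rho : X → X → Module.End R M)
    (a b c : X × M) : X × M :=
  (t a.1 b.1 c.1, lam a.1 b.1 c.2 + mu a.1 c.1 b.2 + rho b.1 c.1 a.2)

/-- The bracket `[-,-,-]_T` on `M` obtained by acting through `T : M → X`. -/
def oOperatorBracket (lam mu rho : X → X → Module.End R M) (T : M → X) (u v w : M) : M :=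
  lam (T u) (T v) w + mu (T u) (T w) v + rho (T v) (T w) u

/-- The `O`-operator identity for a bare function `T`: it carries `[-,-,-]_T` to `t`. -/
def IsOOperator (t : X → X → X → X) (lam mu rho : X → X → Module.End R M) (T : M → X) : Prop :=
  ∀ u v w : M, t (T u) (T v) (T w) = T (oOperatorBracket lam mu rho T u v w)

theorem IsOOperator.semidirectBracket_graph {t : X → X → X → X}
    {lam mu rho : X → X → Module.End R M} {T : M → X} (hT : IsOOperator t lam mu rho T)
    (u v w : M) :
    semidirectBracket t lam mu rho (T u, u) (T v, v) (T w, w) =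
      (T (oOperatorBracket lam mu rho T u v w), oOperatorBracket lam mu rho T u v w) :=
  Prod.ext (hT u v w) rfl

end Brackets

theorem IsTernaryRep.semidirectBracket_leibniz_snd {X : Type*} {t : X → X → X → X}
    {lam mu rho : X → X → Module.End K V} (hrep : IsTernaryRep t lam mu rho)
    (a b c d e : X × V) :
    letI br := semidirectBracket t lam mu rho
    (br (br a b c) d e).2 =
      (br a b (br c d e)).2 + (br a (br b d e) c).2 + (br (br a d e) b c).2 := by
  obtain ⟨lam_bracket, mu_bracket, rho_mul_lam, rho_mul_mu, rho_mul_rho⟩ := hrep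
  rcases a, b, c, d, e with ⟨⟨x, u⟩, ⟨y, v⟩, ⟨z, w⟩, ⟨p, m⟩, ⟨q, n⟩⟩
  have first_slot : rho p q (rho y z u) =
      rho y (t z p q) u + rho (t y p q) z u + rho y z (rho p q u) :=
    LinearMap.congr_fun (rho_mul_rho y z p q) u
  have second_slot : rho p q (mu x z v) =
      mu x (t z p q) v + mu x z (rho p q v) + mu (t x p q) z v :=
    LinearMap.congr_fun (rho_mul_mu x z p q) v
  have third_slot : rho p q (lam x y w) =
      lam x y (rho p q w) + lam x (t y p q) w + lam (t x p q) y w :=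
    LinearMap.congr_fun (rho_mul_lam x y p q) w
  have fourth_slot : mu (t x y z) q m =
      lam x y (mu z q m) + mu x z (mu y q m) + rho y z (mu x q m) :=
    LinearMap.congr_fun (mu_bracket x y z q) m
  have fifth_slot : lam (t x y z) p n =
      lam x y (lam z p n) + mu x z (lam y p n) + rho y z (lam x p n) :=
    LinearMap.congr_fun (lam_bracket x y z p) n
  simp only [semidirectBracket, map_add, first_slot, second_slot, third_slot, fourth_slot,
    fifth_slot]
  abel

theorem oOperator_ternaryLeibniz_general {X : Type*} {t : X → X → X → X}
    {lam mu rho : X → X → Module.End K V} (hrep : IsTernaryRep t lam mu rho)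
    {T : V → X} (hT : IsOOperator t lam mu rho T) :
    TernaryLeibnizId (oOperatorBracket lam mu rho T) := by
  intro x y z p q
  simpa only [hT.semidirectBracket_graph] using
    hrep.semidirectBracket_leibniz_snd (T x, x) (T y, y) (T z, z) (T p, p) (T q, q)

/-- If `T : V → L` is an `O`-operator on a ternary Leibniz algebra `(L, [-,-,-])` with
respect to a representation `(V, λ, μ, ρ)`, then
`[u₁,u₂,u₃]_T := λ(T(u₁),T(u₂))(u₃) + μ(T(u₁),T(u₃))(u₂) + ρ(T(u₂),T(u₃))(u₁)` makes `V`
into a ternary Leibniz algebra. -/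
theorem oOperator_ternaryLeibniz (t : L →ₗ[K] L →ₗ[K] L →ₗ[K] L)
    (ht : TernaryLeibnizId fun x y z => t x y z)
    (lam mu rho : L →ₗ[K] L →ₗ[K] Module.End K V)
    (hrep : IsTernaryRep (fun x y z => t x y z)
      (fun x y => lam x y) (fun x y => mu x y) (fun x y => rho x y))
    (T : V →ₗ[K] L)
    (hT : ∀ u v w : V,
      t (T u) (T v) (T w) =
        T (lam (T u) (T v) w + mu (T u) (T w) v + rho (T v) (T w) u)) :
    TernaryLeibnizId fun u v w : V =>
      lam (T u) (T v) w + mu (T u) (T w) v + rho (T v) (T w) u :=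
  oOperator_ternaryLeibniz_general hrep hT
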